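/- arXiv:2505.14865 — 4 statements merged into one kernel-verified Lean document; each statement's English description precedes it below -/
import Mathlib

section
/- Let n = 2^(2^ν) + 1 be prime with ν ≥ 1 and let ζ = exp(2πi/n). Then Σ ζ^a over all nonzero quadratic residues a modulo n equals (−1 + √n)/2, and Σ ζ^b over all quadratic non-residues b modulo n equals (−1 − √n)/2. -/
open scoped Classical

open Filter Topology in
lemma theta_limit (z : ℝ) (F : ℝ → ℂ) (hF : Tendsto (fun t => (F t).im) atTop atTop) :
    Tendsto (fun t => jacobiTheta₂ (z : ℂ) (F t)) atTop (𝓝 1) := by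
  have h1 : (∑' k : ℤ, if k = 0 then (1 : ℂ) else 0) = 1 := by
    rw [tsum_ite_eq]
  rw [← h1]
  unfold jacobiTheta₂
  refine tendsto_tsum_of_dominated_convergence
    (bound := fun k : ℤ => (|k| ^ 0 : ℝ) * Real.exp (-Real.pi * ((1 : ℝ) * k ^ 2 - 2 * 0 * |k|)))
    (summable_pow_mul_jacobiTheta₂_term_bound 0 one_pos 0) ?_ ?_
  · intro k
    by_cases hk : k = 0
    · subst hk
      simp [jacobiTheta₂_term]
    · simp only [hk, if_false]
      rw [tendsto_zero_iff_norm_tendsto_zero]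
      simp only [norm_jacobiTheta₂_term, Complex.ofReal_im, mul_zero, sub_zero]
      refine Real.tendsto_exp_atBot.comp ?_
      refine Tendsto.const_mul_atTop_of_neg ?_ hF
      have : (0 : ℝ) < (k : ℝ) ^ 2 := by positivity
      nlinarith [Real.pi_pos]
  · filter_upwards [hF.eventually_ge_atTop 1] with t ht k
    rw [pow_zero, one_mul]
    exact_mod_cast norm_jacobiTheta₂_term_le one_pos (S := 0) (by simp) ht k

lemma theta_split (M : ℕ) [NeZero M] (f : ℤ → ℂ) (hf : ∀ (j : ℤ) (r : Fin M), f (j * M + (r : ℕ)) = f (r : ℕ))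
    (τ σ : ℂ) (hτ : 0 < τ.im) (hσ : 0 < σ.im)
    (h : ∀ k : ℤ, Complex.exp (Real.pi * Complex.I * (k : ℂ) ^ 2 * τ) =
      f k * Complex.exp (Real.pi * Complex.I * (k : ℂ) ^ 2 * σ)) :
    jacobiTheta τ * (-Complex.I * (M ^ 2 * σ)) ^ (1 / 2 : ℂ) =
      ∑ r : Fin M, f (r : ℕ) * jacobiTheta₂ (((r : ℕ) / M : ℝ) : ℂ) (-1 / (M ^ 2 * σ)) := by
  have hM : (M : ℂ) ≠ 0 := by exact_mod_cast NeZero.ne M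
  have hσ0 : σ ≠ 0 := by rintro rfl; simp at hσ
  have hA := hasSum_jacobiTheta₂_term 0 hτ
  rw [← jacobiTheta_eq_jacobiTheta₂] at hA
  have hB := (((Int.divModEquiv M).trans (Equiv.prodComm _ _)).symm.hasSum_iff).2 hA
  have him : 0 < ((M : ℂ) ^ 2 * σ).im := by
    have : ((M : ℂ) ^ 2 * σ) = (((M : ℝ) ^ 2 : ℝ) : ℂ) * σ := by push_cast; ring
    rw [this, Complex.im_ofReal_mul]
    have : (0 : ℝ) < M := by exact_mod_cast Nat.pos_of_ne_zero (NeZero.ne M)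
    positivity
  have hne : (-Complex.I * (M ^ 2 * σ)) ^ (1 / 2 : ℂ) ≠ 0 := by
    rw [Ne, Complex.cpow_eq_zero_iff]
    simp [hM, hσ0]
  have hC := hB.prod_fiberwise (g := fun r : Fin M => f (r : ℕ) *
      (Complex.exp (Real.pi * Complex.I * (r : ℕ) ^ 2 * σ) *
        jacobiTheta₂ (M * (r : ℕ) * σ) (M ^ 2 * σ))) ?_
  · rw [← (hasSum_fintype _).unique hC, Finset.sum_mul]
    refine Finset.sum_congr rfl fun r _ => ?_
    rw [jacobiTheta₂_functional_equation (M * (r : ℕ) * σ)]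
    have e1 : (M * (r : ℕ) * σ : ℂ) / (M ^ 2 * σ) = (((r : ℕ) / M : ℝ) : ℂ) := by
      push_cast; field_simp
    have e2 : -(Real.pi : ℂ) * Complex.I * (M * (r : ℕ) * σ) ^ 2 / (M ^ 2 * σ) =
        -(Real.pi * Complex.I * (r : ℕ) ^ 2 * σ) := by
      field_simp
    rw [e1, e2, Complex.exp_neg]
    have := Complex.exp_ne_zero (Real.pi * Complex.I * (r : ℕ) ^ 2 * σ)
    generalize (-Complex.I * (M ^ 2 * σ)) ^ (1 / 2 : ℂ) = u at *
    generalize Complex.exp (Real.pi * Complex.I * (r : ℕ) ^ 2 * σ) = v at *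
    field_simp
  · intro r
    refine (((hasSum_jacobiTheta₂_term (M * (r : ℕ) * σ) him).mul_left
      (Complex.exp (Real.pi * Complex.I * (r : ℕ) ^ 2 * σ))).mul_left (f (r : ℕ))).congr_fun ?_
    intro j
    have := h (j * M + (r : ℕ))
    simp only [Function.comp, Equiv.symm_trans_apply, Equiv.prodComm_symm, Equiv.prodComm_apply,
      Prod.swap_prod_mk, Int.divModEquiv_symm_apply, jacobiTheta₂_term, mul_zero, zero_add]
    rw [this, hf, ← Complex.exp_add]
    congr 2
    push_cast
    ring

open Filter Topology in
lemma gauss_eval (n : ℕ) [NeZero n] (hn : n % 4 = 1) :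
    ∑ r : Fin n, Complex.exp (2 * Real.pi * Complex.I * ((r : ℕ) : ℂ) ^ 2 / n) = (Real.sqrt n : ℂ) := by
  have hn0 : (n : ℂ) ≠ 0 := by exact_mod_cast NeZero.ne n
  have hnpos : (0 : ℝ) < n := by exact_mod_cast Nat.pos_of_ne_zero (NeZero.ne n)
  set S := ∑ r : Fin n, Complex.exp (2 * Real.pi * Complex.I * ((r : ℕ) : ℂ) ^ 2 / n) with hS
  let τ : ℝ → ℂ := fun t => 2 / n + Complex.I / t
  let w : ℝ → ℂ := fun t => 1 / (1 + n * Complex.I / (2 * t))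
  let c : ℝ → ℝ := fun t => n ^ 2 / t
  have hτim : ∀ t : ℝ, (τ t).im = 1 / t := by
    intro t
    have : τ t = ((2 / n : ℝ) : ℂ) + ((1 / t : ℝ) : ℂ) * Complex.I := by
      simp only [τ]; push_cast; ring
    rw [this]; simp
  have hτpos : ∀ t : ℝ, 0 < t → 0 < (τ t).im := fun t ht => by rw [hτim]; positivity
  have hden : ∀ t : ℝ, 0 < t → (1 + n * Complex.I / (2 * t) : ℂ) ≠ 0 := by
    intro t ht h0
    have : (1 + n * Complex.I / (2 * t) : ℂ) = 1 + ((n / (2 * t) : ℝ) : ℂ) * Complex.I := by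
      push_cast; ring
    rw [this] at h0
    have := congrArg Complex.re h0
    rw [Complex.add_re, Complex.re_ofReal_mul] at this
    simp at this
  -- first asymptotic
  have L1 : Tendsto (fun t : ℝ => jacobiTheta (τ t) * (c t : ℂ) ^ (1 / 2 : ℂ)) atTop (𝓝 S) := by
    have hlim : Tendsto (fun t : ℝ => ∑ r : Fin n,
        Complex.exp (2 * Real.pi * Complex.I * ((r : ℕ) : ℂ) ^ 2 / n) *
          jacobiTheta₂ (((r : ℕ) / n : ℝ) : ℂ) (-1 / (n ^ 2 * (Complex.I / t)))) atTop
        (𝓝 (∑ r : Fin n, Complex.exp (2 * Real.pi * Complex.I * ((r : ℕ) : ℂ) ^ 2 / n) * 1)) := by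
      refine tendsto_finsetSum _ fun r _ => Tendsto.const_mul _ (theta_limit _ _ ?_)
      have : ∀ t : ℝ, (-1 / (n ^ 2 * (Complex.I / t)) : ℂ).im = (1 / n ^ 2) * t := by
        intro t
        have : (-1 / (n ^ 2 * (Complex.I / t)) : ℂ) = (((1 / n ^ 2) * t : ℝ) : ℂ) * Complex.I := by
          push_cast
          by_cases ht : (t : ℂ) = 0
          · simp [ht]
          have := Complex.I_ne_zero
          field_simp
          simp
        rw [this, Complex.im_ofReal_mul, Complex.I_im, mul_one]
      simp only [this]
      exact Tendsto.const_mul_atTop (by positivity) tendsto_id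
    simp only [mul_one] at hlim
    refine hlim.congr' ?_
    filter_upwards [eventually_gt_atTop 0] with t ht
    have htc : (t : ℂ) ≠ 0 := by exact_mod_cast ht.ne'
    have := theta_split n (fun k => Complex.exp (2 * Real.pi * Complex.I * (k : ℂ) ^ 2 / n)) ?_
      (τ t) (Complex.I / t) (hτpos t ht) ?_ ?_
    · simp only [Int.cast_natCast] at this
      rw [← this]
      congr 2
      simp only [c]
      push_cast
      field_simp
      simp
    · intro j r
      rw [Complex.exp_eq_exp_iff_exists_int]
      refine ⟨j ^ 2 * n + 2 * j * (r : ℕ), ?_⟩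
      push_cast
      field_simp
      ring
    · have : (Complex.I / t : ℂ) = ((1 / t : ℝ) : ℂ) * Complex.I := by push_cast; ring
      rw [this]; simpa using ht
    · intro k
      rw [← Complex.exp_add]
      congr 1
      simp only [τ]
      field_simp
  -- second asymptotic
  have L2 : Tendsto (fun t : ℝ => jacobiTheta (-1 / τ t) * ((c t : ℂ) * w t) ^ (1 / 2 : ℂ)) atTop
      (𝓝 (1 - Complex.I)) := by
    have hlim : Tendsto (fun t : ℝ => ∑ r : Fin 2,
        Complex.exp (-(Real.pi * Complex.I * ((r : ℕ) : ℂ) ^ 2 * n / 2)) *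
          jacobiTheta₂ (((r : ℕ) / (2 : ℕ) : ℝ) : ℂ) (Complex.I * t / n ^ 2 - 1 / (2 * n))) atTop
        (𝓝 (∑ r : Fin 2, Complex.exp (-(Real.pi * Complex.I * ((r : ℕ) : ℂ) ^ 2 * n / 2)) * 1)) := by
      refine tendsto_finsetSum _ fun r _ => Tendsto.const_mul _ (theta_limit _ _ ?_)
      have : ∀ t : ℝ, (Complex.I * t / n ^ 2 - 1 / (2 * n) : ℂ).im = (1 / n ^ 2) * t := by
        intro t
        have : (Complex.I * t / n ^ 2 - 1 / (2 * n) : ℂ) =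
          (((1 / n ^ 2) * t : ℝ) : ℂ) * Complex.I + ((-1 / (2 * n) : ℝ) : ℂ) := by
          push_cast; ring
        rw [this, Complex.add_im, Complex.im_ofReal_mul, Complex.I_im, Complex.ofReal_im, mul_one,
          add_zero]
      simp only [this]
      exact Tendsto.const_mul_atTop (by positivity) tendsto_id
    have hv : (∑ r : Fin 2, Complex.exp (-(Real.pi * Complex.I * ((r : ℕ) : ℂ) ^ 2 * n / 2)) * 1)
        = 1 - Complex.I := by
      have hI : Complex.exp (-(Real.pi * Complex.I * n / 2)) = - Complex.I := by
        have e : Complex.exp (-(Real.pi / 2 * Complex.I)) = -Complex.I := by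
          rw [Complex.exp_neg, Complex.exp_pi_div_two_mul_I, Complex.inv_I]
        rw [← e, Complex.exp_eq_exp_iff_exists_int]
        refine ⟨-((n / 4 : ℕ) : ℤ), ?_⟩
        have : (n : ℂ) = 4 * ((n / 4 : ℕ) : ℂ) + 1 := by
          exact_mod_cast (show n = 4 * (n / 4) + 1 by omega)
        rw [this, Int.cast_neg, Int.cast_natCast]
        generalize ((n / 4 : ℕ) : ℂ) = m
        ring
      simp [Fin.sum_univ_two, hI, sub_eq_add_neg]
    rw [hv] at hlim
    refine hlim.congr' ?_
    filter_upwards [eventually_gt_atTop 0] with t ht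
    have htc : (t : ℂ) ≠ 0 := by exact_mod_cast ht.ne'
    have hd := hden t ht
    have hd' : (2 * t + n * Complex.I : ℂ) ≠ 0 := by
      intro h0
      apply hd
      field_simp
      linear_combination h0
    have hτe : τ t = (2 * t + n * Complex.I) / (n * t) := by
      simp only [τ]; field_simp
    have hsig : -1 / τ t + n / 2 = (c t * w t) / (4 * (-Complex.I)) := by
      rw [hτe]
      simp only [c, w]
      have hw : (1 + n * Complex.I / (2 * t) : ℂ) = (2 * t + n * Complex.I) / (2 * t) := by
        field_simp
      rw [hw]
      have := Complex.I_ne_zero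
      push_cast
      field_simp
      ring_nf
      simp
      try ring
    have hcw : (c t * w t : ℂ) ≠ 0 := by
      simp only [c, w]
      push_cast
      simp [hn0, htc, hd]
    have hinv : -1 / ((2 : ℕ) ^ 2 * (-1 / τ t + n / 2)) = Complex.I * t / n ^ 2 - 1 / (2 * n) := by
      rw [hsig]
      simp only [c, w] 
      push_cast
      have := Complex.I_ne_zero
      field_simp
      ring_nf
      simp
      try ring
    have him : 0 < (-1 / τ t).im := by
      have := hτpos t ht
      have h0 : τ t ≠ 0 := by intro h; rw [h] at this; simp at this
      rw [neg_div, one_div, Complex.neg_im, Complex.inv_im, neg_div, neg_neg]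
      have : 0 < Complex.normSq (τ t) := Complex.normSq_pos.2 h0
      positivity
    have := theta_split 2 (fun k => Complex.exp (-(Real.pi * Complex.I * (k : ℂ) ^ 2 * n / 2))) ?_
      (-1 / τ t) (-1 / τ t + n / 2) him ?_ ?_
    · simp only [Int.cast_natCast, hinv] at this
      rw [← this]
      congr 2
      rw [hsig]
      have := Complex.I_ne_zero
      push_cast
      field_simp
      try ring
    · intro j r
      rw [Complex.exp_eq_exp_iff_exists_int]
      refine ⟨-(n * (j ^ 2 + j * (r : ℕ))), ?_⟩
      push_cast
      ring
    · have : (n / 2 : ℂ) = ((n / 2 : ℝ) : ℂ) := by push_cast; ring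
      rw [this, Complex.add_im, Complex.ofReal_im, add_zero]
      exact him
    · intro k
      rw [← Complex.exp_add]
      congr 1
      ring
  have hcinv : Tendsto (fun t : ℝ => (1 / (t : ℂ))) atTop (𝓝 0) := by
    have h := (Complex.continuous_ofReal.tendsto 0).comp (tendsto_inv_atTop_zero (𝕜 := ℝ))
    refine h.congr fun t => ?_
    simp
  have L3 : Tendsto (fun t : ℝ => (w t) ^ (1 / 2 : ℂ)) atTop (𝓝 1) := by
    have hw : Tendsto w atTop (𝓝 1) := by
      have : Tendsto (fun t : ℝ => 1 / (1 + n * Complex.I / 2 * (1 / (t : ℂ)))) atTop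
          (𝓝 (1 / (1 + n * Complex.I / 2 * 0))) := by
        refine Tendsto.div tendsto_const_nhds (tendsto_const_nhds.add (hcinv.const_mul _)) (by simp)
      simp only [mul_zero, add_zero, div_one] at this
      refine this.congr fun t => ?_
      simp only [w]
      congr 2
      ring
    have := hw.cpow (tendsto_const_nhds (x := (1 / 2 : ℂ))) (by simp)
    simpa using this
  have L4 : Tendsto (fun t : ℝ => (-Complex.I * τ t) ^ (1 / 2 : ℂ)) atTop
      (𝓝 ((-Complex.I * (2 / n)) ^ (1 / 2 : ℂ))) := by
    refine Tendsto.cpow (Tendsto.const_mul _ ?_) tendsto_const_nhds ?_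
    · have : Tendsto (fun t : ℝ => (2 / n : ℂ) + Complex.I * (1 / (t : ℂ))) atTop
          (𝓝 (2 / n + Complex.I * 0)) := tendsto_const_nhds.add (hcinv.const_mul _)
      simp only [mul_zero, add_zero] at this
      refine this.congr fun t => ?_
      simp only [τ]
      ring
    · right
      have : (-Complex.I * (2 / n) : ℂ) = ((-(2 / n) : ℝ) : ℂ) * Complex.I := by push_cast; ring
      rw [this]
      simp [hnpos.ne']
  have L5 := (L4.mul L1).mul L3
  have heq : (-Complex.I * (2 / n)) ^ (1 / 2 : ℂ) * S * 1 = 1 - Complex.I := by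
    refine tendsto_nhds_unique (L5.congr' ?_) L2
    filter_upwards [eventually_gt_atTop 0] with t ht
    have hc : 0 ≤ c t := by simp only [c]; positivity
    have hmc : ((c t : ℂ) * w t) ^ (1 / 2 : ℂ) = (c t : ℂ) ^ (1 / 2 : ℂ) * w t ^ (1 / 2 : ℂ) := by
      have hcpos : 0 < c t := by simp only [c]; positivity
      have hw0 : w t ≠ 0 := by simp only [w]; exact one_div_ne_zero (hden t ht)
      have hc0 : (c t : ℂ) ≠ 0 := by exact_mod_cast hcpos.ne'
      rw [Complex.cpow_def_of_ne_zero (mul_ne_zero hc0 hw0), Complex.cpow_def_of_ne_zero hc0,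
        Complex.cpow_def_of_ne_zero hw0, Complex.log_ofReal_mul hcpos hw0, ← Complex.exp_add,
        ← Complex.ofReal_log hc]
      congr 1
      ring
    rw [hmc]
    have h1 := jacobiTheta₂_functional_equation 0 (τ t)
    have h0 : τ t ≠ 0 := by
      have := hτpos t ht
      intro h; rw [h] at this; simp at this
    have hne : (-Complex.I * τ t) ^ (1 / 2 : ℂ) ≠ 0 := by
      rw [Ne, Complex.cpow_eq_zero_iff]
      simp [h0]
    rw [jacobiTheta_eq_jacobiTheta₂, jacobiTheta_eq_jacobiTheta₂, h1]
    simp only [zero_div, ne_eq, OfNat.ofNat_ne_zero, not_false_eq_true, zero_pow, mul_zero,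
      Complex.exp_zero, mul_one]
    generalize (-Complex.I * τ t) ^ (1 / 2 : ℂ) = u at *
    field_simp
  have hroot : (-Complex.I * (2 / n)) ^ (1 / 2 : ℂ) = (1 - Complex.I) / (Real.sqrt n : ℂ) := by
    have hs : (0 : ℝ) < Real.sqrt n := Real.sqrt_pos.2 hnpos
    have hsc : (Real.sqrt n : ℂ) ^ 2 = n := by
      exact_mod_cast congrArg (fun x : ℝ => (x : ℂ)) (Real.sq_sqrt hnpos.le)
    have hs0 : (Real.sqrt n : ℂ) ≠ 0 := by exact_mod_cast hs.ne'
    have e : (-Complex.I * (2 / n) : ℂ) = ((1 - Complex.I) / (Real.sqrt n : ℂ)) ^ 2 := by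
      rw [div_pow, hsc, sub_sq, Complex.I_sq]; ring
    have hre : 0 < ((1 - Complex.I) / (Real.sqrt n : ℂ)).re := by
      rw [Complex.div_ofReal_re]; simp; exact_mod_cast hnpos
    have harg := Complex.abs_arg_lt_pi_div_two_iff.2 (Or.inl hre)
    rw [abs_lt] at harg
    rw [e, one_div]
    have := Complex.pow_cpow_nat_inv (x := (1 - Complex.I) / (Real.sqrt n : ℂ)) (n := 2) (by norm_num)
      (by simpa [neg_div] using harg.1) (by simpa using harg.2.le)
    exact_mod_cast this
  rw [hroot] at heq
  have hs0 : (Real.sqrt n : ℂ) ≠ 0 := by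
    exact_mod_cast (Real.sqrt_pos.2 hnpos).ne'
  have h1I : (1 - Complex.I : ℂ) ≠ 0 := by
    intro h
    have := congrArg Complex.re h
    simp at this
  field_simp at heq
  exact heq

lemma exp_pow_val (n : ℕ) [NeZero n] (k : ℕ) :
    Complex.exp (2 * Real.pi * Complex.I / n) ^ (k : ZMod n).val =
      Complex.exp (2 * Real.pi * Complex.I * k / n) := by
  have hn0 : (n : ℂ) ≠ 0 := by exact_mod_cast NeZero.ne n
  have h := pow_mod_orderOf (Complex.exp (2 * Real.pi * Complex.I / n)) k
  rw [← (Complex.isPrimitiveRoot_exp n (NeZero.ne n)).eq_orderOf] at h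
  rw [ZMod.val_natCast, h, ← Complex.exp_nat_mul]
  congr 1
  ring

lemma sum_squares (n : ℕ) [NeZero n] (hp : n.Prime) (h2 : n ≠ 2) (g : ZMod n → ℂ) :
    ∑ x : ZMod n, g (x ^ 2) = g 0 + 2 * ∑ a ∈ Finset.univ.filter
        (fun a : ZMod n => a ≠ 0 ∧ ∃ x : (ZMod n)ˣ, (x : ZMod n) ^ 2 = a), g a := by
  haveI : Fact n.Prime := ⟨hp⟩
  set Q := Finset.univ.filter
        (fun a : ZMod n => a ≠ 0 ∧ ∃ x : (ZMod n)ˣ, (x : ZMod n) ^ 2 = a) with hQ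
  have htwo : (2 : ZMod n) ≠ 0 := by
    intro h
    have := (ZMod.natCast_eq_zero_iff 2 n).1 (by exact_mod_cast h)
    exact h2 ((Nat.prime_dvd_prime_iff_eq hp Nat.prime_two).1 this)
  rw [← Finset.add_sum_erase _ _ (Finset.mem_univ (0 : ZMod n))]
  congr 1
  · simp
  rw [← Finset.sum_fiberwise_of_maps_to (t := Q) (g := fun x : ZMod n => x ^ 2), Finset.mul_sum]
  · refine Finset.sum_congr rfl fun a ha => ?_
    rw [hQ, Finset.mem_filter] at ha
    obtain ⟨-, ha0, u, hu⟩ := ha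
    have hset : (Finset.univ.erase (0 : ZMod n)).filter (fun x => x ^ 2 = a) = {(u : ZMod n), -(u : ZMod n)} := by
      ext x
      simp only [Finset.mem_filter, Finset.mem_erase, Finset.mem_univ, Finset.mem_insert,
        Finset.mem_singleton, and_true]
      rw [← hu, sq_eq_sq_iff_eq_or_eq_neg]
      constructor
      · exact fun h => h.2
      · intro h
        refine ⟨?_, h⟩
        rcases h with h | h <;> rw [h]
        · exact u.ne_zero
        · exact neg_ne_zero.2 u.ne_zero
    have hne : (u : ZMod n) ≠ -u := by
      intro h
      have : (2 : ZMod n) * u = 0 := by linear_combination h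
      rcases mul_eq_zero.1 this with h | h
      · exact htwo h
      · exact u.ne_zero h
    rw [hset, Finset.sum_pair hne, neg_sq, hu]
    ring
  · intro x hx
    have hx0 : x ≠ 0 := (Finset.mem_erase.1 hx).1
    rw [hQ, Finset.mem_filter]
    exact ⟨Finset.mem_univ _, pow_ne_zero _ hx0, Units.mk0 x hx0, rfl⟩

lemma sum_zmod (n : ℕ) [NeZero n] (g : ZMod n → ℂ) :
    ∑ x : ZMod n, g x = ∑ k ∈ Finset.range n, g (k : ℕ) := by
  symm
  refine Finset.sum_bij (fun k _ => (k : ZMod n)) (by simp) ?_ ?_ (by simp)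
  · intro a ha b hb h
    have := congrArg ZMod.val h
    simpa [ZMod.val_natCast, Nat.mod_eq_of_lt (Finset.mem_range.1 ha),
      Nat.mod_eq_of_lt (Finset.mem_range.1 hb)] using this
  · intro x _
    exact ⟨x.val, Finset.mem_range.2 (ZMod.val_lt x), by simp⟩

/-- For a Fermat prime `n = 2 ^ 2 ^ ν + 1` (`ν ≥ 1`) and
`ζ = exp (2 π i / n)`, the sum of `ζ ^ a` over the nonzero quadratic residues `a` mod `n`
equals `(-1 + √n) / 2`, and the sum of `ζ ^ b` over the quadratic non-residues `b` mod `n`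
equals `(-1 - √n) / 2`. -/
theorem stmt10 (ν n : ℕ) [NeZero n] (hν : 1 ≤ ν) (hn : n = 2 ^ (2 ^ ν) + 1) (hp : n.Prime) :
    (∑ a ∈ Finset.univ.filter
        (fun a : ZMod n => a ≠ 0 ∧ ∃ x : (ZMod n)ˣ, (x : ZMod n) ^ 2 = a),
      Complex.exp (2 * Real.pi * Complex.I / n) ^ a.val) =
      (((-1 + Real.sqrt n) / 2 : ℝ) : ℂ) ∧
    (∑ b ∈ Finset.univ.filter
        (fun b : ZMod n => b ≠ 0 ∧ ¬∃ x : (ZMod n)ˣ, (x : ZMod n) ^ 2 = b),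
      Complex.exp (2 * Real.pi * Complex.I / n) ^ b.val) =
      (((-1 - Real.sqrt n) / 2 : ℝ) : ℂ) := by
  have h4 : n % 4 = 1 := by
    obtain ⟨m, hm⟩ : ∃ m, 2 ^ ν = 2 + m := by
      refine ⟨2 ^ ν - 2, ?_⟩
      have : 2 ^ 1 ≤ 2 ^ ν := Nat.pow_le_pow_right (by norm_num) hν
      omega
    rw [hn, hm, pow_add]
    omega
  have h2 : n ≠ 2 := by omega
  have hG := gauss_eval n h4
  rw [Fin.sum_univ_eq_sum_range
    (fun r => Complex.exp (2 * Real.pi * Complex.I * ((r : ℕ) : ℂ) ^ 2 / n))] at hG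
  set g : ZMod n → ℂ := fun a => Complex.exp (2 * Real.pi * Complex.I / n) ^ a.val with hg
  have hS : ∑ x : ZMod n, g (x ^ 2) = (Real.sqrt n : ℂ) := by
    rw [sum_zmod n (fun x => g (x ^ 2)), ← hG]
    refine Finset.sum_congr rfl fun k _ => ?_
    have := exp_pow_val n (k ^ 2)
    push_cast at this
    exact this
  have hQ := sum_squares n hp h2 g
  have hall : ∑ x : ZMod n, g x = 0 := by
    rw [sum_zmod]
    rw [← (Complex.isPrimitiveRoot_exp n (NeZero.ne n)).geom_sum_eq_zero hp.one_lt]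
    refine Finset.sum_congr rfl fun k hk => ?_
    simp only [hg]
    rw [ZMod.val_natCast, Nat.mod_eq_of_lt (Finset.mem_range.1 hk)]
  have hg0 : g 0 = 1 := by simp [hg]
  have hsplit : ∑ x : ZMod n, g x = g 0 +
      (∑ a ∈ Finset.univ.filter
        (fun a : ZMod n => a ≠ 0 ∧ ∃ x : (ZMod n)ˣ, (x : ZMod n) ^ 2 = a), g a +
      ∑ b ∈ Finset.univ.filter
        (fun b : ZMod n => b ≠ 0 ∧ ¬∃ x : (ZMod n)ˣ, (x : ZMod n) ^ 2 = b), g b) := by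
    rw [← Finset.add_sum_erase _ _ (Finset.mem_univ (0 : ZMod n)),
      ← Finset.sum_filter_add_sum_filter_not (Finset.univ.erase (0 : ZMod n))
        (fun a => ∃ x : (ZMod n)ˣ, (x : ZMod n) ^ 2 = a)]
    congr 2
    · refine Finset.sum_congr ?_ fun _ _ => rfl
      ext x
      simp
    · refine Finset.sum_congr ?_ fun _ _ => rfl
      ext x
      simp
  rw [hS, hg0] at hQ
  rw [hall, hg0] at hsplit
  push_cast
  constructor
  · linear_combination (-1 / 2 : ℂ) * hQ
  · linear_combination (1 / 2 : ℂ) * hQ - hsplit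
end

section
/- Let n = 65537 and ζ = exp(2πi/65537). Let H be the subgroup of fourth powers in the group of units of ZMod 65537 (a subgroup of index 4), and set η₀ = Σ_{a ∈ H} ζ^a and η₂ = Σ_{a ∈ 9·H} ζ^a, where 9·H is the coset of H containing 9 = 3². Then η₀ · η₂ = −4096, i.e. the product of these two quartic Gaussian periods equals −(65537 − 1)/16. -/
namespace Quartic

/-- Sum of `B ^ (t % 7)`, `t = (1 + 9 k c ^ j) ^ 16384 mod 65537`, over `j < 2 ^ n`. -/
def wt (k : ℕ) : ℕ :=
  2 ^ (15 * ((((((1 + 9 * k) ^ 16 % 65537) ^ 16 % 65537) ^ 16 % 65537) ^ 4 % 65537) % 7))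

def tot : ℕ → ℕ → ℕ → ℕ
  | 0, _, k => wt k
  | n + 1, c, k => tot n (c ^ 2 % 65537) k + tot n (c ^ 2 % 65537) (k * c % 65537)

theorem tot_val : tot 14 81 1 = 4096 * (2 ^ 15 + 2 ^ 60 + 2 ^ 30 + 2 ^ 90) := by
  decide +kernel

theorem fact_p : Fact (Nat.Prime 65537) := ⟨by norm_num⟩

attribute [local instance] fact_p

/-- Weight as a function on `ZMod`. -/
def wz (k : ZMod 65537) : ℕ := 2 ^ (15 * (((1 + 9 * k) ^ 16384).val % 7))

theorem wt_eq (k : ℕ) : wt k = wz (k : ZMod 65537) := by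
  unfold wt wz
  have h : ((1 + 9 * (k : ZMod 65537)) ^ 16384) = (((1 + 9 * k) ^ 16384 : ℕ) : ZMod 65537) := by
    push_cast; rfl
  rw [h, ZMod.val_natCast]
  rw [← Nat.pow_mod, ← pow_mul, ← Nat.pow_mod, ← pow_mul, ← Nat.pow_mod, ← pow_mul]

theorem sum_double (N : ℕ) (f : ℕ → ℕ) :
    ∑ j ∈ Finset.range (2 * N), f j =
      ∑ j ∈ Finset.range N, f (2 * j) + ∑ j ∈ Finset.range N, f (2 * j + 1) := by
  induction N with
  | zero => simp
  | succ N ih =>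
    rw [show 2 * (N + 1) = 2 * N + 1 + 1 by ring, Finset.sum_range_succ, Finset.sum_range_succ, ih,
      Finset.sum_range_succ, Finset.sum_range_succ]
    ring

theorem sum_four (N : ℕ) (f : ℕ → ℂ) :
    ∑ j ∈ Finset.range (4 * N), f j =
      ∑ j ∈ Finset.range N, (f (4 * j) + f (4 * j + 1) + f (4 * j + 2) + f (4 * j + 3)) := by
  induction N with
  | zero => simp
  | succ N ih =>
    rw [show 4 * (N + 1) = 4 * N + 1 + 1 + 1 + 1 by ring, Finset.sum_range_succ,
      Finset.sum_range_succ, Finset.sum_range_succ, Finset.sum_range_succ, ih,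
      Finset.sum_range_succ]
    ring

theorem tot_eq (n : ℕ) : ∀ c k : ℕ,
    tot n c k = ∑ j ∈ Finset.range (2 ^ n), wz ((k : ZMod 65537) * (c : ZMod 65537) ^ j) := by
  induction n with
  | zero => intro c k; simp [tot, wt_eq]
  | succ n ih =>
    intro c k
    rw [tot, ih, ih, pow_succ' 2 n, sum_double]
    refine congrArg₂ (· + ·) ?_ ?_
    · refine Finset.sum_congr rfl fun j _ => ?_
      rw [ZMod.natCast_mod, Nat.cast_pow, ← pow_mul]
    · refine Finset.sum_congr rfl fun j _ => ?_
      rw [ZMod.natCast_mod, ZMod.natCast_mod, Nat.cast_pow, ← pow_mul, Nat.cast_mul, pow_succ,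
        mul_assoc, mul_comm (c : ZMod 65537)]

theorem p3a : (3 : ZMod 65537) ^ 16384 = 65281 := by
  have : ((3 ^ 16384 : ℕ) : ZMod 65537) = ((65281 : ℕ) : ZMod 65537) := by
    rw [ZMod.natCast_eq_natCast_iff]
    show _ % _ = _ % _
    decide +kernel
  exact_mod_cast this

theorem sq1 : (65281 : ZMod 65537) ^ 2 = 65536 := by decide +kernel
theorem sq2 : (65536 : ZMod 65537) ^ 2 = 1 := by decide +kernel
theorem mul3 : (65281 : ZMod 65537) * 65536 = 256 := by decide +kernel

theorem p3b : (3 : ZMod 65537) ^ 32768 = 65536 := by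
  rw [show 32768 = 16384 * 2 by norm_num, pow_mul, p3a, sq1]

theorem p3c : (3 : ZMod 65537) ^ 65536 = 1 := by
  rw [show 65536 = 32768 * 2 by norm_num, pow_mul, p3b, sq2]

theorem ord3 : orderOf (3 : ZMod 65537) = 65536 := by
  have : orderOf (3 : ZMod 65537) = 2 ^ (15 + 1) := by
    apply orderOf_eq_prime_pow
    · rw [show 2 ^ 15 = 32768 by norm_num, p3b]; decide +kernel
    · rw [show 2 ^ (15 + 1) = 65536 by norm_num, p3c]
  rw [this]; norm_num

theorem e81 : (81 : ZMod 65537) = 3 ^ 4 := by norm_num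

theorem inj3 : Set.InjOn (fun n : ℕ => (3 : ZMod 65537) ^ n) (Finset.range 65536) := by
  intro a ha b hb h
  refine pow_injOn_Iio_orderOf ?_ ?_ h <;> rw [ord3]
  · simpa using ha
  · simpa using hb

theorem units_eq : Finset.image (fun n : ℕ => (3 : ZMod 65537) ^ n) (Finset.range 65536) =
    Finset.univ.erase 0 := by
  apply Finset.eq_of_subset_of_card_le
  · intro x hx
    obtain ⟨n, -, rfl⟩ := Finset.mem_image.1 hx
    simp only [Finset.mem_erase, Finset.mem_univ, and_true]
    exact pow_ne_zero _ (by decide +kernel)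
  · rw [Finset.card_image_of_injOn inj3, Finset.card_erase_of_mem (Finset.mem_univ _),
      Finset.card_univ, ZMod.card, Finset.card_range]

theorem exists_pow (x : ZMod 65537) (hx : x ≠ 0) : ∃ n : ℕ, x = 3 ^ n := by
  have : x ∈ Finset.univ.erase (0 : ZMod 65537) := by simp [hx]
  rw [← units_eq] at this
  obtain ⟨n, -, h⟩ := Finset.mem_image.1 this
  exact ⟨n, h.symm⟩

theorem p81 : (81 : ZMod 65537) ^ 16384 = 1 := by
  rw [e81, ← pow_mul, ← p3c]

theorem inj81 : Set.InjOn (fun n : ℕ => (81 : ZMod 65537) ^ n) (Finset.range 16384) := by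
  intro a ha b hb h
  simp only [Finset.coe_range, Set.mem_Iio] at ha hb
  simp only [e81, ← pow_mul] at h
  have := inj3 (x₁ := 4 * a) (x₂ := 4 * b) (by simp; omega) (by simp; omega) h
  omega

theorem H_eq : Finset.image (fun x : (ZMod 65537)ˣ => (x : ZMod 65537) ^ 4) Finset.univ =
    Finset.image (fun n : ℕ => (81 : ZMod 65537) ^ n) (Finset.range 16384) := by
  ext y
  simp only [Finset.mem_image, Finset.mem_univ, true_and, Finset.mem_range]
  constructor
  · rintro ⟨x, rfl⟩
    obtain ⟨n, hn⟩ := exists_pow (x : ZMod 65537) x.ne_zero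
    refine ⟨n % 16384, Nat.mod_lt _ (by norm_num), ?_⟩
    rw [hn, ← pow_mul, mul_comm n 4, pow_mul, ← e81]
    conv_rhs => rw [← Nat.mod_add_div n 16384, pow_add, pow_mul, p81, one_pow, mul_one]
  · rintro ⟨n, -, rfl⟩
    refine ⟨Units.mk0 ((3 : ZMod 65537) ^ n) (pow_ne_zero _ (by decide +kernel)), ?_⟩
    rw [Units.val_mk0, e81, ← pow_mul, ← pow_mul, mul_comm]


/-- Gaussian period for the coset of `c`. -/
noncomputable def eta (e : AddChar (ZMod 65537) ℂ) (c : ZMod 65537) : ℂ :=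
  ∑ j ∈ Finset.range 16384, e (c * 81 ^ j)

theorem eta_shift (e : AddChar (ZMod 65537) ℂ) (c : ZMod 65537) : eta e (c * 81) = eta e c := by
  unfold eta
  have h1 := Finset.sum_range_succ (fun j => e (c * 81 ^ j)) 16384
  have h2 := Finset.sum_range_succ' (fun j => e (c * 81 ^ j)) 16384
  rw [h1] at h2
  simp only [p81, pow_zero] at h2
  have h3 := add_right_cancel h2
  rw [h3]
  refine Finset.sum_congr rfl fun j _ => ?_
  rw [pow_succ']
  ring_nf

theorem eta_pow (e : AddChar (ZMod 65537) ℂ) (c : ZMod 65537) (i : ℕ) :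
    eta e (c * 81 ^ i) = eta e c := by
  induction i with
  | zero => simp
  | succ i ih => rw [pow_succ, ← mul_assoc, eta_shift, ih]

theorem eta_sum (e : AddChar (ZMod 65537) ℂ) (he : e ≠ 1) :
    eta e 1 + eta e 3 + eta e 9 + eta e 27 = -1 := by
  have h0 : ∑ x, e x = 0 := by
    rw [AddChar.sum_eq_zero_iff_ne_zero]
    exact he
  have h1 : ∑ x ∈ Finset.univ.erase (0 : ZMod 65537), e x = -1 := by
    have := Finset.add_sum_erase Finset.univ (fun x => e x) (Finset.mem_univ (0 : ZMod 65537))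
    rw [h0, AddChar.map_zero_eq_one] at this
    linear_combination this
  rw [← units_eq, Finset.sum_image inj3, show 65536 = 4 * 16384 by norm_num, sum_four] at h1
  rw [← h1]
  unfold eta
  simp only [← Finset.sum_add_distrib]
  refine Finset.sum_congr rfl fun j _ => ?_
  simp only [pow_add, pow_mul, ← e81]
  norm_num
  ring_nf

theorem eta_prod (e : AddChar (ZMod 65537) ℂ) :
    eta e 1 * eta e 9 = ∑ j ∈ Finset.range 16384, eta e (1 + 9 * 81 ^ j) := by
  conv_lhs => rw [eta, Finset.sum_mul]
  simp only [one_mul]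
  have : ∀ i ∈ Finset.range 16384, e (81 ^ i) * eta e 9 =
      ∑ j ∈ Finset.range 16384, e ((1 + 9 * 81 ^ j) * 81 ^ i) := by
    intro i _
    rw [← eta_pow e 9 i, eta, Finset.mul_sum]
    refine Finset.sum_congr rfl fun j _ => ?_
    rw [← AddChar.map_add_eq_mul]
    congr 1
    ring
  rw [Finset.sum_congr rfl this, Finset.sum_comm]
  rfl

/-- quartic character -/
theorem class_cases (e : AddChar (ZMod 65537) ℂ) (c : ZMod 65537) (hc : c ≠ 0) :
    (c ^ 16384 = 1 ∧ eta e c = eta e 1) ∨ (c ^ 16384 = 65281 ∧ eta e c = eta e 3) ∨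
    (c ^ 16384 = 65536 ∧ eta e c = eta e 9) ∨ (c ^ 16384 = 256 ∧ eta e c = eta e 27) := by
  obtain ⟨n, rfl⟩ := exists_pow c hc
  have hn : (3 : ZMod 65537) ^ n = 3 ^ (n % 4) * 81 ^ (n / 4) := by
    conv_lhs => rw [← Nat.mod_add_div n 4, pow_add, pow_mul, ← e81]
  rw [hn, eta_pow, mul_pow, ← pow_mul 81, mul_comm (n / 4), pow_mul 81, p81, one_pow, mul_one,
    ← pow_mul, mul_comm (n % 4), pow_mul, p3a]
  have h4 : n % 4 < 4 := Nat.mod_lt _ (by norm_num)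
  generalize n % 4 = r at h4
  interval_cases r
  · left; simp
  · right; left; simp
  · right; right; left
    refine ⟨sq1, ?_⟩
    norm_num
  · right; right; right
    refine ⟨by rw [pow_succ', sq1, mul3], ?_⟩
    norm_num

theorem c_ne (j : ℕ) : (1 + 9 * 81 ^ j : ZMod 65537) ≠ 0 := by
  intro h
  have h1 : (9 * 81 ^ j : ZMod 65537) = -1 := by linear_combination h
  have h2 : (9 * 81 ^ j : ZMod 65537) ^ 16384 = (-1) ^ 16384 := by rw [h1]
  rw [mul_pow, ← pow_mul 81, mul_comm j, pow_mul 81, p81, one_pow, mul_one,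
    show (9 : ZMod 65537) = 3 ^ 2 by norm_num, ← pow_mul, Even.neg_one_pow (by decide)] at h2
  norm_num only at h2
  rw [p3b] at h2
  revert h2
  decide +kernel

theorem key (e : AddChar (ZMod 65537) ℂ) (s : Finset ℕ) :
    ∃ a b c d : ℕ, a + b + c + d = s.card ∧
      ∑ j ∈ s, wz (81 ^ j) = a * 2 ^ 15 + b * 2 ^ 90 + c * 2 ^ 30 + d * 2 ^ 60 ∧
      ∑ j ∈ s, eta e (1 + 9 * 81 ^ j) = a * eta e 1 + b * eta e 3 + c * eta e 9 + d * eta e 27 := by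
  induction s using Finset.induction_on with
  | empty => exact ⟨0, 0, 0, 0, by simp⟩
  | insert j s hj ih =>
    obtain ⟨a, b, c, d, h1, h2, h3⟩ := ih
    rw [Finset.sum_insert hj, Finset.sum_insert hj, Finset.card_insert_of_notMem hj, h2, h3, ← h1,
      wz]
    rcases class_cases e _ (c_ne j) with ⟨h, h'⟩ | ⟨h, h'⟩ | ⟨h, h'⟩ | ⟨h, h'⟩ <;> rw [h, h']
    · refine ⟨a + 1, b, c, d, by ring, ?_, by push_cast; ring⟩
      rw [show (1 : ZMod 65537).val = 1 from rfl]; norm_num; ring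
    · refine ⟨a, b + 1, c, d, by ring, ?_, by push_cast; ring⟩
      rw [show (65281 : ZMod 65537).val = 65281 from rfl]; norm_num; ring
    · refine ⟨a, b, c + 1, d, by ring, ?_, by push_cast; ring⟩
      rw [show (65536 : ZMod 65537).val = 65536 from rfl]; norm_num; ring
    · refine ⟨a, b, c, d + 1, by ring, ?_, by push_cast; ring⟩
      rw [show (256 : ZMod 65537).val = 256 from rfl]; norm_num; ring

theorem main (e : AddChar (ZMod 65537) ℂ) (he : e ≠ 1) : eta e 1 * eta e 9 = -4096 := by
  obtain ⟨a, b, c, d, h1, h2, h3⟩ := key e (Finset.range 16384)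
  have ht := tot_eq 14 81 1
  rw [tot_val, show 2 ^ 14 = 16384 by norm_num] at ht
  simp only [Nat.cast_one, one_mul, Nat.cast_ofNat] at ht
  rw [← ht] at h2
  rw [Finset.card_range] at h1
  norm_num at h2
  have ha : a = 4096 := by omega
  have hb : b = 4096 := by omega
  have hc : c = 4096 := by omega
  have hd : d = 4096 := by omega
  rw [eta_prod, h3, ha, hb, hc, hd]
  push_cast
  linear_combination 4096 * eta_sum e he

end Quartic

/-- Let `ζ = exp (2 π i / 65537)`, let `H = {x ^ 4 : x ∈ (ZMod 65537)ˣ}` be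
the subgroup of fourth powers mod `65537`, `η₀ = ∑_{a ∈ H} ζ ^ a` and `η₂ = ∑_{a ∈ 9 H} ζ ^ a`.
Then `η₀ * η₂ = -4096 = -(65537 - 1) / 16`. -/
theorem stmt12 :
    (∑ a ∈ Finset.image (fun x : (ZMod 65537)ˣ => (x : ZMod 65537) ^ 4) Finset.univ,
        Complex.exp (2 * Real.pi * Complex.I / 65537) ^ a.val) *
    (∑ a ∈ Finset.image (fun x : (ZMod 65537)ˣ => 9 * (x : ZMod 65537) ^ 4) Finset.univ,
        Complex.exp (2 * Real.pi * Complex.I / 65537) ^ a.val) = -4096 := by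
  have hprim : IsPrimitiveRoot (Complex.exp (2 * Real.pi * Complex.I / 65537)) 65537 := by
    simpa using Complex.isPrimitiveRoot_exp 65537 (by norm_num)
  generalize Complex.exp (2 * Real.pi * Complex.I / 65537) = z at hprim
  have hz : z ^ 65537 = 1 := hprim.pow_eq_one
  have he : AddChar.zmodChar 65537 hz ≠ 1 := by
    intro h
    have h1 := congrArg (fun e : AddChar (ZMod 65537) ℂ => e 1) h
    simp only [AddChar.zmodChar_apply, AddChar.one_apply] at h1
    rw [show (1 : ZMod 65537).val = 1 from rfl, pow_one] at h1
    exact hprim.ne_one (by norm_num) h1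
  rw [← Quartic.main _ he]
  have h9 : Finset.image (fun x : (ZMod 65537)ˣ => 9 * (x : ZMod 65537) ^ 4) Finset.univ =
      Finset.image (fun y : ZMod 65537 => 9 * y)
        (Finset.image (fun x : (ZMod 65537)ˣ => (x : ZMod 65537) ^ 4) Finset.univ) := by
    rw [Finset.image_image]; rfl
  have n9 : (9 : ZMod 65537) ≠ 0 := by decide +kernel
  have := Quartic.fact_p
  rw [h9, Finset.sum_image (fun a _ b _ h => mul_left_cancel₀ n9 h), Quartic.H_eq,
    Finset.sum_image Quartic.inj81, Finset.sum_image Quartic.inj81]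
  simp only [Quartic.eta, AddChar.zmodChar_apply, one_mul]
end

section
/- Let n = 65537 and ζ = exp(2πi/65537), let H be the subgroup of fourth powers in the group of units of ZMod 65537 and η₀ = Σ_{a ∈ H} ζ^a the corresponding quartic Gaussian period. Then η₀ is real and η₀ = (A − √(A² + 16384))/2, where A = (−1 + √65537)/2. -/
set_option maxRecDepth 4000

/-- Binary-splitting sum of `F` over `c * 81 ^ j mod 65537`, `j < 2 ^ k`. -/
def treeSum (F : ℕ → ℕ) (k : ℕ) : ℕ → ℕ :=
  Nat.rec (fun c => F c)
    (fun k ih c => Nat.add (ih c) (ih (Nat.mod (Nat.mul c (Nat.mod (Nat.pow 81 (Nat.pow 2 k)) 65537)) 65537))) k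

/-- Class of `x` modulo fourth powers: `x ^ 16384 mod 65537`. -/
def clsN (x : ℕ) : ℕ :=
  Nat.mod (Nat.pow (Nat.mod (Nat.pow (Nat.mod (Nat.pow (Nat.mod (Nat.pow x 16) 65537) 16) 65537) 16) 65537) 4) 65537

/-- Indicator that `1 + 9 c` lies in the class `v`. -/
def indN (v c : ℕ) : ℕ := Bool.toNat (Nat.beq (clsN (Nat.add 1 (Nat.mul 9 c))) v)

/-- Scaled square of the argument. -/
def zN (c : ℕ) : ℕ := 15421329 * (65537 * 65537 - 4 * c * (65537 - c))

/-- Positive terms of the scaled Taylor polynomial of cosine. -/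
def posN (c : ℕ) : ℕ :=
  479001600 * 81921250 ^ 12 + 19958400 * 81921250 ^ 8 * zN c ^ 2
    + 11880 * 81921250 ^ 4 * zN c ^ 4 + zN c ^ 6

/-- Negative terms of the scaled Taylor polynomial of cosine. -/
def negN (c : ℕ) : ℕ :=
  239500800 * 81921250 ^ 10 * zN c + 665280 * 81921250 ^ 6 * zN c ^ 3
    + 132 * 81921250 ^ 2 * zN c ^ 5

theorem cnt0 : treeSum (indN 1) 14 1 = 4096 := by decide +kernel
theorem cnt1 : treeSum (indN 65281) 14 1 = 4096 := by decide +kernel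
theorem cnt2 : treeSum (indN 65536) 14 1 = 4096 := by decide +kernel
theorem cnt3 : treeSum (indN 256) 14 1 = 4096 := by decide +kernel
theorem posSum : treeSum posN 14 1 = 1312596377471074756462816292003328871948734455601051452479889838108281599757649350402151730827528717236087808 := by decide +kernel
theorem negSum : treeSum negN 14 1 = 1311430023530668520981441069468377590991841562078435992451893180197636357116025151427016352382788025600000000 := by decide +kernel

theorem factPrime65537 : Fact (Nat.Prime 65537) := ⟨by norm_num⟩

section Field

attribute [local instance] factPrime65537

theorem treeSum_eq (F : ℕ → ℕ) (k c : ℕ) (hc : c < 65537) :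
    treeSum F k c = ∑ j ∈ Finset.range (2 ^ k), F (c * 81 ^ j % 65537) := by
  induction k generalizing c with
  | zero =>
    simp only [pow_zero, Finset.range_one, Finset.sum_singleton, mul_one]
    rw [Nat.mod_eq_of_lt hc]; rfl
  | succ k ih =>
    have h : treeSum F (k + 1) c
        = treeSum F k c + treeSum F k (c * (81 ^ (2 ^ k) % 65537) % 65537) := rfl
    rw [h, ih _ hc, ih _ (Nat.mod_lt _ (by norm_num)), pow_succ, mul_two, Finset.sum_range_add]
    congr 1
    refine Finset.sum_congr rfl fun j _ => ?_
    congr 1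
    rw [pow_add, ← mul_assoc]
    simp [Nat.mul_mod, Nat.pow_mod]

theorem zpow_eq (b e r : ℕ) (h : b ^ e % 65537 = r % 65537) :
    (b : ZMod 65537) ^ e = (r : ZMod 65537) := by
  rw [← Nat.cast_pow, ZMod.natCast_eq_natCast_iff]
  exact h

theorem three_half : (3 : ZMod 65537) ^ 32768 = 65536 := by
  have h := zpow_eq 3 32768 65536 (by decide +kernel)
  simpa only [Nat.cast_ofNat] using h

theorem three_pow : (3 : ZMod 65537) ^ 65536 = 1 := by
  have h := zpow_eq 3 65536 1 (by decide +kernel)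
  simpa only [Nat.cast_ofNat, Nat.cast_one] using h

theorem e_pow : (81 : ZMod 65537) ^ 16384 = 1 := by
  have h := zpow_eq 81 16384 1 (by decide +kernel)
  simpa only [Nat.cast_ofNat, Nat.cast_one] using h

theorem pow_d1 : (3 : ZMod 65537) ^ 16384 = 65281 := by
  have h := zpow_eq 3 16384 65281 (by decide +kernel)
  simpa only [Nat.cast_ofNat] using h

theorem pow_d2 : (9 : ZMod 65537) ^ 16384 = 65536 := by
  have h := zpow_eq 9 16384 65536 (by decide +kernel)
  simpa only [Nat.cast_ofNat] using h

theorem pow_d3 : (27 : ZMod 65537) ^ 16384 = 256 := by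
  have h := zpow_eq 27 16384 256 (by decide +kernel)
  simpa only [Nat.cast_ofNat] using h

theorem three_order : orderOf (3 : ZMod 65537) = 65536 := by
  have h := orderOf_eq_prime_pow (x := (3 : ZMod 65537)) (p := 2) (n := 15) ?_ ?_
  · rw [h]; norm_num
  · rw [show 2 ^ 15 = 32768 by norm_num, three_half]
    decide +kernel
  · rw [show 2 ^ (15 + 1) = 65536 by norm_num, three_pow]

theorem three_ne : (3 : ZMod 65537) ≠ 0 := by decide +kernel

theorem three_inj : Set.InjOn (fun m : ℕ => (3 : ZMod 65537) ^ m) (Finset.range 65536) := by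
  intro a ha b hb h
  simp only [Finset.coe_range, Set.mem_Iio] at ha hb
  exact pow_injOn_Iio_orderOf (x := (3 : ZMod 65537)) (by rw [three_order]; exact ha)
    (by rw [three_order]; exact hb) h

theorem image_three : (Finset.range 65536).image (fun m : ℕ => (3 : ZMod 65537) ^ m)
    = Finset.univ.erase 0 := by
  apply Finset.eq_of_subset_of_card_le
  · intro x hx
    rw [Finset.mem_image] at hx
    obtain ⟨m, -, rfl⟩ := hx
    exact Finset.mem_erase.2 ⟨pow_ne_zero _ three_ne, Finset.mem_univ _⟩
  · rw [Finset.card_image_of_injOn three_inj, Finset.card_erase_of_mem (Finset.mem_univ _),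
      Finset.card_univ, ZMod.card, Finset.card_range]

theorem exists_three {u : ZMod 65537} (hu : u ≠ 0) : ∃ m : ℕ, u = 3 ^ m := by
  have : u ∈ Finset.univ.erase (0 : ZMod 65537) := Finset.mem_erase.2 ⟨hu, Finset.mem_univ _⟩
  rw [← image_three, Finset.mem_image] at this
  obtain ⟨m, -, h⟩ := this
  exact ⟨m, h.symm⟩

theorem sum_units (f : ZMod 65537 → ℂ) :
    ∑ x ∈ Finset.univ.erase 0, f x = ∑ m ∈ Finset.range 65536, f (3 ^ m) := by
  rw [← image_three, Finset.sum_image three_inj]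

theorem sum_range_mul (f : ℕ → ℂ) (N : ℕ) :
    ∑ m ∈ Finset.range (N * 4), f m = ∑ j ∈ Finset.range N, f (4 * j)
      + ∑ j ∈ Finset.range N, f (4 * j + 1) + ∑ j ∈ Finset.range N, f (4 * j + 2)
      + ∑ j ∈ Finset.range N, f (4 * j + 3) := by
  induction N with
  | zero => simp
  | succ N ih =>
    rw [add_mul, one_mul, Finset.sum_range_succ, Finset.sum_range_succ, Finset.sum_range_succ,
      Finset.sum_range_succ, ih]
    simp only [Finset.sum_range_succ, mul_comm N 4]
    ring

/-- The period `∑ e(u 81^j)`. -/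
noncomputable def per (u : ZMod 65537) : ℂ :=
  ∑ j ∈ Finset.range 16384, ZMod.stdAddChar (u * 81 ^ j)

theorem sum_shift (f : ZMod 65537 → ℂ) (i : ℕ) :
    ∑ j ∈ Finset.range 16384, f (81 ^ (i + j)) = ∑ j ∈ Finset.range 16384, f (81 ^ j) := by
  induction i with
  | zero => simp
  | succ i ih =>
    rw [← ih]
    have h1 := Finset.sum_range_succ (fun j => f (81 ^ (i + j))) 16384
    have h2 := Finset.sum_range_succ' (fun j => f (81 ^ (i + j))) 16384
    have h3 : f (81 ^ (i + 16384)) = f (81 ^ (i + 0)) := by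
      rw [pow_add, e_pow, mul_one, add_zero]
    have h4 : ∀ j, i + 1 + j = i + (j + 1) := fun j => by ring
    simp only [h4]
    rw [h1, h3] at h2
    exact (add_right_cancel h2).symm

theorem per_mul (u : ZMod 65537) (i : ℕ) : per (u * 81 ^ i) = per u := by
  unfold per
  rw [← sum_shift (fun x => ZMod.stdAddChar (u * x)) i]
  refine Finset.sum_congr rfl fun j _ => ?_
  rw [pow_add, mul_assoc]

theorem sum_four (f : ZMod 65537 → ℂ) :
    ∑ x ∈ Finset.univ.erase 0, f x = ∑ j ∈ Finset.range 16384, f (1 * 81 ^ j)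
      + ∑ j ∈ Finset.range 16384, f (3 * 81 ^ j) + ∑ j ∈ Finset.range 16384, f (9 * 81 ^ j)
      + ∑ j ∈ Finset.range 16384, f (27 * 81 ^ j) := by
  have hr := sum_range_mul (fun m => f (3 ^ m)) 16384
  rw [show 16384 * 4 = 65536 by norm_num] at hr
  rw [sum_units, hr]
  have h : ∀ j : ℕ, (3 : ZMod 65537) ^ (4 * j) = 81 ^ j := fun j => by
    rw [pow_mul, show (3 : ZMod 65537) ^ 4 = 81 by norm_num]
  have h1 : ∀ j : ℕ, (3 : ZMod 65537) ^ (4 * j + 1) = 3 * 81 ^ j := fun j => by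
    rw [pow_add, h, pow_one, mul_comm]
  have h2 : ∀ j : ℕ, (3 : ZMod 65537) ^ (4 * j + 2) = 9 * 81 ^ j := fun j => by
    rw [pow_add, h, mul_comm, show (3 : ZMod 65537) ^ 2 = 9 by norm_num]
  have h3 : ∀ j : ℕ, (3 : ZMod 65537) ^ (4 * j + 3) = 27 * 81 ^ j := fun j => by
    rw [pow_add, h, mul_comm, show (3 : ZMod 65537) ^ 3 = 27 by norm_num]
  simp only [h1, h2, h3, h, one_mul]

theorem per_sum : per 1 + per 3 + per 9 + per 27 = -1 := by
  have h := sum_four (fun x => ZMod.stdAddChar x)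
  have h0 : ∑ x : ZMod 65537, (ZMod.stdAddChar x : ℂ) = 0 := by
    apply AddChar.sum_eq_zero_of_ne_one
    have := ZMod.isPrimitive_stdAddChar 65537 (one_ne_zero (α := ZMod 65537))
    simpa [AddChar.mulShift_one] using this
  have h1 := Finset.add_sum_erase Finset.univ (fun x : ZMod 65537 => (ZMod.stdAddChar x : ℂ))
    (Finset.mem_univ 0)
  rw [h0, AddChar.map_zero_eq_one] at h1
  unfold per
  rw [← h]
  linear_combination h1

theorem three_nonsq : quadraticChar (ZMod 65537) 3 = -1 := by
  rw [quadraticChar_neg_one_iff_not_isSquare, FiniteField.isSquare_iff]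
  · rw [ZMod.card, show 65537 / 2 = 32768 by norm_num, three_half]
    decide +kernel
  · rw [ZMod.ringChar_zmod_n]; norm_num
  · exact three_ne

theorem gauss_sq : (per 1 + per 9 - per 3 - per 27) ^ 2 = 65537 := by
  set χ := (quadraticChar (ZMod 65537)).ringHomComp (Int.castRingHom ℂ) with hχ
  have hq : χ.IsQuadratic := (quadraticChar_isQuadratic _).comp _
  have hχ3 : χ 3 = -1 := by
    rw [hχ, MulChar.ringHomComp_apply, three_nonsq]; simp
  have hne : χ ≠ 1 := by
    intro h
    rw [h, MulChar.one_apply (isUnit_iff_ne_zero.2 three_ne)] at hχ3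
    norm_num at hχ3
  have h := gaussSum_sq hne hq (ZMod.isPrimitive_stdAddChar 65537)
  have h9 : χ 9 = 1 := by
    rw [show (9 : ZMod 65537) = 3 * 3 by norm_num, map_mul, hχ3]; norm_num
  have h27 : χ 27 = -1 := by
    rw [show (27 : ZMod 65537) = 9 * 3 by norm_num, map_mul, hχ3, h9]; norm_num
  have h81 : χ 81 = 1 := by
    rw [show (81 : ZMod 65537) = 9 * 9 by norm_num, map_mul, h9]; norm_num
  have hm : χ (-1) = 1 := by
    rw [show (-1 : ZMod 65537) = 256 ^ 2 by decide +kernel, show (256 : ZMod 65537) ^ 2 = (2 ^ 2) ^ 8 by norm_num, map_pow, map_pow]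
    have h2 : χ 2 ^ 2 = 1 := by
      rw [← map_pow]
      have h0 : χ (2 ^ 2) = 1 := by
        rcases hq 2 with h | h | h
        · exfalso
          have : IsUnit (χ 2) := (isUnit_iff_ne_zero.2 (by decide +kernel : (2 : ZMod 65537) ≠ 0)).map χ
          rw [h] at this
          simp at this
        · rw [map_pow, h]; norm_num
        · rw [map_pow, h]; norm_num
      exact h0
    rw [h2]; norm_num
  rw [hm, ZMod.card, one_mul] at h
  have hs : gaussSum χ ZMod.stdAddChar = per 1 + per 9 - per 3 - per 27 := by
    unfold gaussSum
    rw [← Finset.add_sum_erase Finset.univ _ (Finset.mem_univ (0 : ZMod 65537)), sum_four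
      (fun a => χ a * ZMod.stdAddChar a)]
    simp only [map_mul, map_pow, h81, h9, h27, hχ3, one_pow, mul_one, one_mul,
      MulChar.map_zero, zero_mul, zero_add, neg_mul, Finset.sum_neg_distrib]
    unfold per
    simp only [one_mul]
    ring
  rw [← hs, h]
  norm_num

theorem per_cls (u : ZMod 65537) (hu : u ≠ 0) :
    per u = (if u ^ 16384 = 1 then per 1 else 0) + (if u ^ 16384 = 3 ^ 16384 then per 3 else 0)
      + (if u ^ 16384 = 9 ^ 16384 then per 9 else 0)
      + (if u ^ 16384 = 27 ^ 16384 then per 27 else 0) := by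
  obtain ⟨m, rfl⟩ := exists_three hu
  obtain ⟨k, r, hr, rfl⟩ : ∃ k r, r < 4 ∧ m = r + 4 * k :=
    ⟨m / 4, m % 4, Nat.mod_lt _ (by norm_num), by omega⟩
  have h : (3 : ZMod 65537) ^ (4 * k) = 81 ^ k := by
    rw [pow_mul, show (3 : ZMod 65537) ^ 4 = 81 by norm_num]
  have h1 : ((3 : ZMod 65537) ^ r * 81 ^ k) ^ 16384 = (3 ^ r) ^ 16384 := by
    rw [mul_pow, ← pow_mul 81, mul_comm k, pow_mul 81, e_pow, one_pow, mul_one]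
  rw [pow_add, h, per_mul, h1]
  have d1 : (3 : ZMod 65537) ^ 16384 = 65281 := pow_d1
  have d2 : (9 : ZMod 65537) ^ 16384 = 65536 := pow_d2
  have d3 : (27 : ZMod 65537) ^ 16384 = 256 := pow_d3
  have n1 : (1 : ZMod 65537) ≠ 65281 := by decide +kernel
  have n2 : (1 : ZMod 65537) ≠ 65536 := by decide +kernel
  have n3 : (1 : ZMod 65537) ≠ 256 := by decide +kernel
  have n4 : (65281 : ZMod 65537) ≠ 65536 := by decide +kernel
  have n5 : (65281 : ZMod 65537) ≠ 256 := by decide +kernel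
  have n6 : (65536 : ZMod 65537) ≠ 256 := by decide +kernel
  rw [d1, d2, d3]
  have q2 : (3 : ZMod 65537) ^ 2 = 9 := by norm_num
  have q3 : (3 : ZMod 65537) ^ 3 = 27 := by norm_num
  interval_cases r
  · rw [pow_zero, one_pow, if_pos rfl, if_neg n1, if_neg n2, if_neg n3]; ring
  · rw [pow_one, d1, if_pos rfl, if_neg n1.symm, if_neg n4, if_neg n5]; ring
  · rw [q2, d2, if_pos rfl, if_neg n2.symm, if_neg n4.symm, if_neg n6]; ring
  · rw [q3, d3, if_pos rfl, if_neg n3.symm, if_neg n5.symm, if_neg n6.symm]; ring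

theorem clsN_cast (x : ℕ) : clsN x = x ^ 16384 % 65537 := by
  have : clsN x = ((((x ^ 16 % 65537) ^ 16 % 65537) ^ 16 % 65537) ^ 4) % 65537 := rfl
  rw [this, ← Nat.pow_mod, ← pow_mul, ← Nat.pow_mod, ← pow_mul, ← Nat.pow_mod, ← pow_mul]

theorem cnt_sum (w : ℕ) (v : ZMod 65537) (hw : w < 65537) (hv : (w : ZMod 65537) = v) (z : ℂ)
    (h : treeSum (indN w) 14 1 = 4096) :
    ∑ j ∈ Finset.range 16384, (if (1 + 9 * 81 ^ j : ZMod 65537) ^ 16384 = v then z else 0)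
      = 4096 * z := by
  rw [treeSum_eq _ _ _ (by norm_num), show 2 ^ 14 = 16384 by norm_num] at h
  have h' := congrArg (fun n : ℕ => (n : ℂ) * z) h
  simp only [Nat.cast_sum, Finset.sum_mul] at h'
  push_cast at h'
  rw [← h']
  refine Finset.sum_congr rfl fun j _ => ?_
  have key : (Nat.beq (clsN (Nat.add 1 (Nat.mul 9 (1 * 81 ^ j % 65537)))) w = true)
      ↔ (1 + 9 * 81 ^ j : ZMod 65537) ^ 16384 = v := by
    rw [Nat.beq_eq, clsN_cast, ← hv]
    have h3 : ((((1 + 9 * (1 * 81 ^ j % 65537)) ^ 16384 : ℕ)) : ZMod 65537)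
        = (1 + 9 * 81 ^ j : ZMod 65537) ^ 16384 := by
      rw [Nat.cast_pow, Nat.cast_add, Nat.cast_mul, ZMod.natCast_mod]
      push_cast
      rw [one_mul]
    rw [← h3, ZMod.natCast_eq_natCast_iff, Nat.ModEq, Nat.mod_eq_of_lt hw]
    rfl
  unfold indN
  by_cases hc : (1 + 9 * 81 ^ j : ZMod 65537) ^ 16384 = v
  · rw [if_pos hc, key.2 hc]; simp
  · rw [if_neg hc, Bool.eq_false_iff.2 (fun h => hc (key.1 h))]; simp

theorem ne_zero_one_add (j : ℕ) : (1 + 9 * 81 ^ j : ZMod 65537) ≠ 0 := by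
  intro h
  have h1 : (9 * 81 ^ j : ZMod 65537) ^ 16384 = (-1) ^ 16384 := by
    congr 1; linear_combination h
  rw [mul_pow, ← pow_mul 81, mul_comm j, pow_mul 81, e_pow, one_pow, mul_one, pow_d2,
    Even.neg_one_pow (by decide +kernel)] at h1
  exact absurd h1 (by decide +kernel)

theorem per_prod : per 1 * per 9 = -4096 := by
  have h1 : per 1 * per 9 = ∑ j ∈ Finset.range 16384, per (1 + 9 * 81 ^ j) := by
    unfold per
    rw [Finset.sum_mul, Finset.sum_comm]
    refine Finset.sum_congr rfl fun i _ => ?_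
    rw [← sum_shift (fun x => ZMod.stdAddChar (9 * x)) i, Finset.mul_sum]
    refine Finset.sum_congr rfl fun j _ => ?_
    rw [← AddChar.map_add_eq_mul]
    congr 1
    rw [pow_add]; ring
  rw [h1, Finset.sum_congr rfl fun j _ => per_cls _ (ne_zero_one_add j)]
  simp only [Finset.sum_add_distrib]
  rw [cnt_sum 1 1 (by norm_num) (by norm_num) _ cnt0,
    cnt_sum 65281 _ (by norm_num) (by rw [pow_d1, Nat.cast_ofNat]) _ cnt1,
    cnt_sum 65536 _ (by norm_num) (by rw [pow_d2, Nat.cast_ofNat]) _ cnt2,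
    cnt_sum 256 _ (by norm_num) (by rw [pow_d3, Nat.cast_ofNat]) _ cnt3]
  linear_combination 4096 * per_sum

theorem cos_approx (x : ℝ) (hx : |x| ≤ 3927 / 1250) :
    |Real.cos x - (1 - x ^ 2 / 2 + x ^ 4 / 24 - x ^ 6 / 720 + x ^ 8 / 40320 - x ^ 10 / 3628800
      + x ^ 12 / 479001600)| ≤ 3 / 10000 := by
  have hn : ‖(x * Complex.I : ℂ)‖ = |x| := by simp
  have h := Complex.exp_bound' (x := x * Complex.I) (n := 14) (by
    rw [hn]; push_cast; linarith)
  have h2 := (Complex.abs_re_le_norm _).trans h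
  rw [Complex.sub_re, Complex.exp_ofReal_mul_I_re, hn] at h2
  have h3 : (∑ m ∈ Finset.range 14, (x * Complex.I : ℂ) ^ m / (m.factorial : ℂ)).re
      = 1 - x ^ 2 / 2 + x ^ 4 / 24 - x ^ 6 / 720 + x ^ 8 / 40320 - x ^ 10 / 3628800
      + x ^ 12 / 479001600 := by
    have e : (∑ m ∈ Finset.range 14, (x * Complex.I : ℂ) ^ m / (m.factorial : ℂ))
      = ((1 - x ^ 2 / 2 + x ^ 4 / 24 - x ^ 6 / 720 + x ^ 8 / 40320 - x ^ 10 / 3628800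
      + x ^ 12 / 479001600 : ℝ) : ℂ) + ((x - x ^ 3 / 6 + x ^ 5 / 120 - x ^ 7 / 5040
      + x ^ 9 / 362880 - x ^ 11 / 39916800 + x ^ 13 / 6227020800 : ℝ) : ℂ) * Complex.I := by
      have i2 := Complex.I_sq
      have i3 : Complex.I ^ 3 = - Complex.I := Complex.I_pow_three
      have i4 : Complex.I ^ 4 = 1 := Complex.I_pow_four
      have i5 : Complex.I ^ 5 = Complex.I := by rw [show 5 = 4 + 1 from rfl, pow_add, i4]; ring
      have i6 : Complex.I ^ 6 = -1 := by rw [show 6 = 4 + 2 from rfl, pow_add, i4, i2]; ring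
      have i7 : Complex.I ^ 7 = -Complex.I := by rw [show 7 = 4 + 3 from rfl, pow_add, i4, i3]; ring
      have i8 : Complex.I ^ 8 = 1 := by rw [show 8 = 4 + 4 from rfl, pow_add, i4]; ring
      have i9 : Complex.I ^ 9 = Complex.I := by rw [show 9 = 8 + 1 from rfl, pow_add, i8]; ring
      have i10 : Complex.I ^ 10 = -1 := by rw [show 10 = 8 + 2 from rfl, pow_add, i8, i2]; ring
      have i11 : Complex.I ^ 11 = -Complex.I := by
        rw [show 11 = 8 + 3 from rfl, pow_add, i8, i3]; ring
      have i12 : Complex.I ^ 12 = 1 := by rw [show 12 = 8 + 4 from rfl, pow_add, i8, i4]; ring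
      have i13 : Complex.I ^ 13 = Complex.I := by
        rw [show 13 = 12 + 1 from rfl, pow_add, i12]; ring
      simp only [Finset.sum_range_succ, Finset.sum_range_zero, mul_pow, i2, i3, i4, i5, i6, i7, i8,
        i9, i10, i11, i12, i13, Nat.factorial]
      push_cast
      ring
    rw [e, Complex.add_re, Complex.ofReal_re, Complex.re_ofReal_mul]
    simp
  rw [h3] at h2
  refine h2.trans ?_
  have h4 : |x| ^ 14 ≤ (3927 / 1250) ^ 14 := by gcongr
  have h5 : ((Nat.factorial 14 : ℕ) : ℝ) = 87178291200 := by norm_num [Nat.factorial]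
  rw [h5]
  calc |x| ^ 14 / 87178291200 * 2 ≤ (3927 / 1250) ^ 14 / 87178291200 * 2 := by gcongr
    _ ≤ _ := by norm_num

theorem cos_lip (x y : ℝ) : |Real.cos x - Real.cos y| ≤ |x - y| := by
  rw [Real.cos_sub_cos, abs_mul, abs_mul]
  have h1 := Real.abs_sin_le_one ((x + y) / 2)
  have h2 : |Real.sin ((x - y) / 2)| ≤ |(x - y) / 2| := Real.abs_sin_le_abs
  have h3 : |(x - y) / 2| = |x - y| / 2 := by rw [abs_div]; norm_num
  rw [h3] at h2
  have h4 := mul_le_mul h1 h2 (abs_nonneg _) zero_le_one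
  rw [abs_neg, abs_two, mul_assoc]
  linarith

theorem term_bound (c : ℕ) (hc : c ≤ 65537) :
    |Real.cos (2 * Real.pi * c / 65537)
      - ((negN c : ℝ) - posN c) / (479001600 * 81921250 ^ 12)| ≤ 4 / 10000 := by
  have hc' : (c : ℝ) ≤ 65537 := by exact_mod_cast hc
  have hc0 : (0 : ℝ) ≤ c := Nat.cast_nonneg c
  set t : ℝ := (2 * c - 65537) / 65537 with ht
  have ht1 : |t| ≤ 1 := by
    rw [abs_le]; constructor
    · rw [ht, le_div_iff₀ (by norm_num)]; linarith
    · rw [ht, div_le_iff₀ (by norm_num)]; linarith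
  have e1 : Real.cos (2 * Real.pi * c / 65537) = - Real.cos (Real.pi * t) := by
    rw [← Real.cos_add_pi]; congr 1; rw [ht]; field_simp; ring
  have l1 := cos_lip (Real.pi * t) (3927 / 1250 * t)
  have l2 := cos_approx (3927 / 1250 * t) (by
    rw [abs_mul, abs_of_pos (by norm_num : (0 : ℝ) < 3927 / 1250)]; linarith)
  have l3 : |Real.pi * t - 3927 / 1250 * t| ≤ 1 / 10000 := by
    rw [← sub_mul, abs_mul]
    have : |Real.pi - 3927 / 1250| ≤ 1 / 10000 := by
      rw [abs_le]; constructor <;> linarith [Real.pi_gt_d6, Real.pi_lt_d6]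
    calc _ ≤ 1 / 10000 * (1 : ℝ) := by gcongr
      _ = _ := by ring
  have e2 : ((negN c : ℝ) - posN c) / (479001600 * 81921250 ^ 12)
      = - (1 - (3927 / 1250 * t) ^ 2 / 2 + (3927 / 1250 * t) ^ 4 / 24 - (3927 / 1250 * t) ^ 6 / 720
        + (3927 / 1250 * t) ^ 8 / 40320 - (3927 / 1250 * t) ^ 10 / 3628800
        + (3927 / 1250 * t) ^ 12 / 479001600) := by
    have hz0 : 4 * c * (65537 - c) ≤ 65537 * 65537 := by
      zify [hc]; nlinarith [sq_nonneg (2 * (c : ℤ) - 65537)]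
    have hz : (zN c : ℝ) = 81921250 ^ 2 * (3927 / 1250 * t) ^ 2 := by
      unfold zN
      rw [Nat.cast_mul, Nat.cast_sub hz0, Nat.cast_mul (4 * c), Nat.cast_sub hc, ht]
      push_cast
      ring
    unfold negN posN
    push_cast
    rw [hz]
    generalize 3927 / 1250 * t = s
    ring
  have l4 := abs_le.1 (l1.trans l3)
  have l5 := abs_le.1 l2
  rw [e1, e2, abs_le]
  constructor <;> linarith [l4.1, l4.2, l5.1, l5.2]

theorem std_eq (a : ZMod 65537) : (ZMod.stdAddChar a : ℂ)
    = Complex.exp (2 * Real.pi * Complex.I / 65537) ^ a.val := by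
  have h := ZMod.stdAddChar_coe (N := 65537) (a.val : ℤ)
  rw [Int.cast_natCast, ZMod.natCast_zmod_val] at h
  rw [h, ← Complex.exp_nat_mul]
  congr 1
  push_cast
  ring

theorem std_re (a : ZMod 65537) : (ZMod.stdAddChar a : ℂ).re
    = Real.cos (2 * Real.pi * a.val / 65537) := by
  rw [std_eq, ← Complex.exp_nat_mul,
    show ((a.val : ℂ) * (2 * Real.pi * Complex.I / 65537))
      = ((2 * Real.pi * a.val / 65537 : ℝ) : ℂ) * Complex.I by push_cast; ring,
    Complex.exp_ofReal_mul_I_re]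

theorem per_re : |(per 1).re + 80 / 3| ≤ 10 := by
  have hp := posSum
  have hn := negSum
  rw [treeSum_eq _ _ _ (by norm_num), show 2 ^ 14 = 16384 by norm_num] at hp hn
  have hp' := congrArg (fun n : ℕ => (n : ℝ)) hp
  have hn' := congrArg (fun n : ℕ => (n : ℝ)) hn
  simp only [Nat.cast_sum] at hp' hn'
  have hval : ∀ j : ℕ, ((1 * 81 ^ j : ZMod 65537)).val = 1 * 81 ^ j % 65537 := fun j => by
    have e : (1 * 81 ^ j : ZMod 65537) = ((1 * 81 ^ j : ℕ) : ZMod 65537) := by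
      rw [Nat.cast_mul, Nat.cast_pow, Nat.cast_one, Nat.cast_ofNat]
    rw [e, ZMod.val_natCast]
  have hb : |∑ j ∈ Finset.range 16384, (Real.cos (2 * Real.pi * (1 * 81 ^ j % 65537 : ℕ) / 65537)
      - ((negN (1 * 81 ^ j % 65537) : ℝ) - posN (1 * 81 ^ j % 65537))
        / (479001600 * 81921250 ^ 12))| ≤ ∑ j ∈ Finset.range 16384, (4 / 10000 : ℝ) :=
    (Finset.abs_sum_le_sum_abs _ _).trans
      (Finset.sum_le_sum fun j _ => term_bound _ (Nat.mod_lt _ (by norm_num)).le)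
  rw [Finset.sum_sub_distrib, ← Finset.sum_div, Finset.sum_sub_distrib, hp', hn',
    Finset.sum_const, Finset.card_range, nsmul_eq_mul] at hb
  have hre : (per 1).re
      = ∑ j ∈ Finset.range 16384, Real.cos (2 * Real.pi * (1 * 81 ^ j % 65537 : ℕ) / 65537) := by
    unfold per
    rw [Complex.re_sum]
    refine Finset.sum_congr rfl fun j _ => ?_
    rw [std_re, hval]
  rw [← hre, abs_le] at hb
  norm_num at hb
  rw [abs_le]
  constructor <;> linarith [hb.1, hb.2]

end Field

theorem sum_H : (∑ a ∈ Finset.image (fun x : (ZMod 65537)ˣ => (x : ZMod 65537) ^ 4) Finset.univ,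
        Complex.exp (2 * Real.pi * Complex.I / 65537) ^ a.val) = per 1 := by
  haveI := factPrime65537
  have h : ∀ j : ℕ, (3 : ZMod 65537) ^ (4 * j) = 81 ^ j := fun j => by
    rw [pow_mul, show (3 : ZMod 65537) ^ 4 = 81 by norm_num]
  have hH : Finset.image (fun x : (ZMod 65537)ˣ => (x : ZMod 65537) ^ 4) Finset.univ
      = (Finset.range 16384).image (fun j : ℕ => (81 : ZMod 65537) ^ j) := by
    ext a
    simp only [Finset.mem_image, Finset.mem_univ, true_and, Finset.mem_range]
    constructor
    · rintro ⟨x, rfl⟩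
      obtain ⟨m, hm⟩ := exists_three x.ne_zero
      refine ⟨m % 16384, Nat.mod_lt _ (by norm_num), ?_⟩
      rw [hm, ← pow_mul, mul_comm, h]
      conv_rhs => rw [← Nat.mod_add_div m 16384, pow_add, pow_mul, e_pow, one_pow, mul_one]
    · rintro ⟨j, -, rfl⟩
      refine ⟨Units.mk0 (3 ^ j) (pow_ne_zero _ three_ne), ?_⟩
      rw [Units.val_mk0, ← pow_mul, mul_comm, h]
  rw [hH, Finset.sum_image]
  · unfold per
    refine Finset.sum_congr rfl fun j _ => ?_
    rw [one_mul, std_eq]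
  · intro a ha b hb hab
    simp only [Finset.coe_range, Set.mem_Iio] at ha hb
    have := three_inj (x₁ := 4 * a) (x₂ := 4 * b)
      (by simp only [Finset.coe_range, Set.mem_Iio]; omega)
      (by simp only [Finset.coe_range, Set.mem_Iio]; omega)
      (by simp only [h]; exact hab)
    omega

theorem real_root (S B : ℝ) (z w : ℂ) (hs : z + w = B) (hp : z * w = -4096)
    (hS : S = Real.sqrt (B ^ 2 + 16384)) :
    z = (((B - S) / 2 : ℝ) : ℂ) ∨ z = (((B + S) / 2 : ℝ) : ℂ) := by
  have hS2 : S ^ 2 = B ^ 2 + 16384 := by rw [hS, Real.sq_sqrt (by positivity)]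
  have hS2c : (S : ℂ) ^ 2 = B ^ 2 + 16384 := by exact_mod_cast hS2
  have : (z - (B - S) / 2) * (z - (B + S) / 2) = 0 := by
    linear_combination z * hs - hp - hS2c / 4
  rcases mul_eq_zero.1 this with h | h
  · left; push_cast; exact sub_eq_zero.1 h
  · right; push_cast; exact sub_eq_zero.1 h

/-- Let `ζ = exp (2 π i / 65537)`, let `H = {x ^ 4 : x ∈ (ZMod 65537)ˣ}` be
the subgroup of fourth powers mod `65537` and `η₀ = ∑_{a ∈ H} ζ ^ a` the corresponding quartic
Gaussian period. Then `η₀` is real and `η₀ = (A - √(A ^ 2 + 16384)) / 2`, where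
`A = (-1 + √65537) / 2`. -/
theorem stmt13 (A : ℝ) (hA : A = (-1 + Real.sqrt 65537) / 2) :
    (∑ a ∈ Finset.image (fun x : (ZMod 65537)ˣ => (x : ZMod 65537) ^ 4) Finset.univ,
        Complex.exp (2 * Real.pi * Complex.I / 65537) ^ a.val) =
      (((A - Real.sqrt (A ^ 2 + 16384)) / 2 : ℝ) : ℂ) := by
  rw [sum_H]
  set s := Real.sqrt 65537 with hs
  have hs2 : s ^ 2 = 65537 := by rw [hs, Real.sq_sqrt (by norm_num)]
  have hs2c : (s : ℂ) ^ 2 = 65537 := by exact_mod_cast hs2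
  have s1 : 256 ≤ s := Real.le_sqrt_of_sq_le (by norm_num)
  have s2 : s ≤ 257 := by rw [hs, Real.sqrt_le_left (by norm_num)]; norm_num
  have hg := gauss_sq
  have hsum := per_sum
  have hprod := per_prod
  have hre := abs_le.1 per_re
  have hG : (per 1 + per 9 - per 3 - per 27 - s) * (per 1 + per 9 - per 3 - per 27 + s) = 0 := by
    linear_combination hg - hs2c
  rcases mul_eq_zero.1 hG with h | h
  · have hB : per 1 + per 9 = (A : ℂ) := by
      rw [hA]; push_cast; linear_combination (h + hsum) / 2
    rcases real_root _ A _ _ hB hprod rfl with h1 | h1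
    · exact h1
    · exfalso
      rw [h1, Complex.ofReal_re] at hre
      have := Real.sqrt_nonneg (A ^ 2 + 16384)
      linarith [hre.2]
  · exfalso
    have hB : per 1 + per 9 = (((-1 - s) / 2 : ℝ) : ℂ) := by
      push_cast; linear_combination (h + hsum) / 2
    have r1 : 170 ≤ Real.sqrt (((-1 - s) / 2) ^ 2 + 16384) :=
      Real.le_sqrt_of_sq_le (by nlinarith)
    rcases real_root _ _ _ _ hB hprod rfl with h1 | h1
    · rw [h1, Complex.ofReal_re] at hre
      linarith [hre.1]
    · rw [h1, Complex.ofReal_re] at hre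
      linarith [hre.2]
end

section
/- Let n = 2^(2^ν) + 1 be prime with ν ≥ 1. Then there exists a tower of fields ℚ = K₀ ⊆ K₁ ⊆ ... ⊆ K_{2^ν − 1} of subfields of ℝ such that each extension K_{i+1}/K_i has degree 2 and 2·cos(2π/n) ∈ K_{2^ν − 1}. In particular, for every Fermat prime n the regular n-gon is constructible with compass and straightedge. -/
open IntermediateField Polynomial in
theorem tower_of_abelian {k₀ E : Type*} [Field k₀] [Field E] [Algebra k₀ E] (k : ℕ) :
    ∀ (F : IntermediateField k₀ E), IsAbelianGalois k₀ F →
    Module.finrank k₀ F = 2 ^ k →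
    ∃ K : ℕ → IntermediateField k₀ E, K 0 = ⊥ ∧ (∀ i < k, K i ≤ K (i + 1)) ∧
      (∀ i < k, IntermediateField.relfinrank (K i) (K (i + 1)) = 2) ∧ K k = F := by
  induction k with
  | zero =>
    intro F _ h
    refine ⟨fun _ => ⊥, rfl, by simp, by simp, ?_⟩
    exact (IntermediateField.finrank_eq_one_iff.mp (by simpa using h)).symm
  | succ k ih =>
    intro F hab h
    have hfd : FiniteDimensional k₀ F := Module.finite_of_finrank_pos (by rw [h]; positivity)
    have hcard : Nat.card Gal(F/k₀) = 2 ^ (k + 1) := by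
      rw [IsGalois.card_aut_eq_finrank, h]
    have : Fact (Nat.Prime 2) := ⟨Nat.prime_two⟩
    obtain ⟨g, hg⟩ := exists_prime_orderOf_dvd_card' (G := Gal(F/k₀)) 2
      (by rw [hcard, pow_succ]; exact dvd_mul_left _ _)
    have h2 : Module.finrank (fixedField (Subgroup.zpowers g)) F = 2 := by
      rw [finrank_fixedField_eq_card, Nat.card_zpowers, hg]
    set F₁ := fixedField (Subgroup.zpowers g) with hF₁
    have hmul := Module.finrank_mul_finrank k₀ F₁ F
    rw [h2, h, pow_succ] at hmul
    have e : F₁ ≃ₐ[k₀] IntermediateField.lift F₁ := IntermediateField.liftAlgEquiv F₁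
    have hlift : Module.finrank k₀ (IntermediateField.lift F₁) = 2 ^ k := by
      rw [← e.toLinearEquiv.finrank_eq]; omega
    have hle : IntermediateField.lift F₁ ≤ F := IntermediateField.lift_le F₁
    obtain ⟨K, h0, h1, h3, h4⟩ := ih (IntermediateField.lift F₁)
      (IsAbelianGalois.of_algHom e.symm.toAlgHom) hlift
    refine ⟨fun i => if i ≤ k then K i else F, by simp [h0], ?_, ?_, by simp⟩
    · intro i hi
      rcases Nat.lt_succ_iff_lt_or_eq.mp hi with hi | rfl
      · simpa [hi.le, Nat.succ_le_of_lt hi] using h1 i hi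
      · simpa [h4] using hle
    · intro i hi
      rcases Nat.lt_succ_iff_lt_or_eq.mp hi with hi | rfl
      · simpa [hi.le, Nat.succ_le_of_lt hi] using h3 i hi
      · have := IntermediateField.finrank_bot_mul_relfinrank hle
        rw [hlift, h, pow_succ] at this
        simpa [h4] using Nat.eq_of_mul_eq_mul_left (by positivity) this

open IntermediateField Polynomial in
theorem real_cyclotomic_aux {k R L : Type*} [Field k] [Field R] [Field L] [Algebra k R]
    [Algebra k L] (f : R →ₐ[k] L) (n m : ℕ) [NeZero n] (hm : 1 ≤ m) (hn : n.totient = 2 ^ m)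
    (hirr : Irreducible (cyclotomic n k))
    (ζ : L) (c : R) (hζ : IsPrimitiveRoot ζ n) (hcζ : f c = ζ + ζ⁻¹) (hr : ∀ r, f r ≠ ζ) :
    IsAbelianGalois k k⟮c⟯ ∧ Module.finrank k k⟮c⟯ = 2 ^ (m - 1) := by
  have hn0 : n ≠ 0 := NeZero.ne n
  have hζ0 : ζ ≠ 0 := hζ.ne_zero hn0
  have hint : IsIntegral k ζ := hζ.isIntegral (Nat.pos_of_ne_zero hn0) |>.tower_top
  have hcyc : IsCyclotomicExtension {n} k k⟮ζ⟯ := by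
    change IsCyclotomicExtension {n} k k⟮ζ⟯.toSubalgebra
    rw [adjoin_simple_toSubalgebra_of_isAlgebraic hint.isAlgebraic]
    exact hζ.adjoin_isCyclotomicExtension k
  have hab : IsAbelianGalois k k⟮ζ⟯ := IsCyclotomicExtension.isAbelianGalois {n} k _
  have hdeg : Module.finrank k k⟮ζ⟯ = 2 ^ m := by
    rw [IsCyclotomicExtension.finrank (n := n) _ hirr, hn]
  have hmap : k⟮c⟯.map f = k⟮f c⟯ := by
    rw [adjoin_map]; simp
  let e : k⟮c⟯ ≃ₐ[k] k⟮f c⟯ :=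
    (IntermediateField.equivMap k⟮c⟯ f).trans (IntermediateField.equivOfEq hmap)
  have hle : k⟮f c⟯ ≤ k⟮ζ⟯ := by
    rw [adjoin_simple_le_iff, hcζ]
    exact add_mem (mem_adjoin_simple_self _ _) (inv_mem (mem_adjoin_simple_self _ _))
  refine ⟨IsAbelianGalois.of_algHom ((IntermediateField.inclusion hle).comp e.toAlgHom), ?_⟩
  rw [e.toLinearEquiv.finrank_eq]
  set P := k⟮f c⟯ with hP
  have hintP : IsIntegral P ζ := hint.tower_top
  have hcP : f c ∈ P := mem_adjoin_simple_self _ _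
  have hnot : ζ ∉ (algebraMap P L).range := by
    rintro ⟨⟨x, hx⟩, hxz⟩
    rw [← hmap] at hx
    obtain ⟨r, -, hr'⟩ := hx
    exact hr r (hr'.trans hxz)
  have hge := (minpoly.two_le_natDegree_iff hintP).mpr hnot
  have hle2 : (minpoly P ζ).natDegree ≤ 2 := by
    let q : P[X] := X ^ 2 - C ⟨f c, hcP⟩ * X + C 1
    have hq : q.natDegree = 2 := by simp only [q]; compute_degree!
    have hq0 : q ≠ 0 := by intro h; simp [h] at hq
    rw [← hq]
    apply natDegree_le_of_dvd _ hq0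
    apply minpoly.dvd
    simp only [q, map_add, map_sub, map_mul, map_pow, aeval_X, aeval_C, map_one]
    change ζ ^ 2 - f c * ζ + 1 = 0
    rw [hcζ]; field_simp; ring
  have hfin : Module.finrank P P⟮ζ⟯ = 2 := by
    rw [adjoin.finrank hintP]; omega
  have hres : P⟮ζ⟯.restrictScalars k = k⟮ζ⟯ := by
    rw [restrictScalars_adjoin_eq_sup]; exact sup_eq_right.mpr hle
  have hmul := Module.finrank_mul_finrank k P P⟮ζ⟯
  have : Module.finrank k P⟮ζ⟯ = 2 ^ m := by
    rw [← hdeg, ← hres]; rfl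
  rw [hfin, this] at hmul
  obtain ⟨m, rfl⟩ : ∃ j, m = j + 1 := ⟨m - 1, by omega⟩
  rw [pow_succ] at hmul
  simp only [Nat.add_sub_cancel]; omega


theorem stmt19_aux (n m : ℕ) (hm : 1 ≤ m) (hn : n = 2 ^ m + 1) (hp : n.Prime) (h3 : 3 ≤ n) :
    ∃ F : IntermediateField ℚ ℝ, 2 * Real.cos (2 * Real.pi / n) ∈ F ∧
    ∃ K : ℕ → IntermediateField ℚ ℝ, K 0 = ⊥ ∧ (∀ i < m - 1, K i ≤ K (i + 1)) ∧
      (∀ i < m - 1, IntermediateField.relfinrank (K i) (K (i + 1)) = 2) ∧ K (m - 1) = F := by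
  have hn0 : n ≠ 0 := by omega
  have : NeZero n := ⟨hn0⟩
  have hζ := Complex.isPrimitiveRoot_exp n hn0
  obtain ⟨hab, hdeg⟩ := real_cyclotomic_aux (Complex.ofRealAm.restrictScalars ℚ) n m hm
    (by rw [Nat.totient_prime hp, hn]; simp) (Polynomial.cyclotomic.irreducible_rat (by omega))
    _ (2 * Real.cos (2 * Real.pi / n)) hζ
    (by
      change ((2 * Real.cos (2 * Real.pi / n) : ℝ) : ℂ) = _
      rw [← Complex.exp_neg]
      push_cast
      rw [Complex.two_cos]
      congr 2 <;> ring)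
    (by
      intro r hrz
      change (r : ℂ) = _ at hrz
      have h1 : r ^ n = 1 := by
        have := hζ.pow_eq_one
        rw [← hrz] at this; exact_mod_cast this
      have hodd : Odd n := by
        rw [hn]; exact Even.add_one ((Nat.even_pow).mpr ⟨even_two, by omega⟩)
      have h2 : r = 1 := hodd.strictMono_pow.injective (by simpa using h1)
      have := hζ.ne_one (by omega)
      apply this; rw [← hrz, h2]; simp)
  exact ⟨_, IntermediateField.mem_adjoin_simple_self _ _, tower_of_abelian _ _ hab hdeg⟩

/-- For every Fermat prime `n = 2 ^ 2 ^ ν + 1` (`ν ≥ 1`) there exists a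
tower of subfields `ℚ = K₀ ⊆ K₁ ⊆ … ⊆ K_{2^ν - 1}` of `ℝ` such that each extension
`K_{i+1} / K_i` has degree `2` and `2 cos (2π / n) ∈ K_{2^ν - 1}`. In particular, the regular
`n`-gon is constructible with compass and straightedge. -/
theorem stmt19 (ν n : ℕ) (hν : 1 ≤ ν) (hn : n = 2 ^ (2 ^ ν) + 1) (hp : n.Prime) :
    ∃ K : ℕ → IntermediateField ℚ ℝ,
      K 0 = ⊥ ∧
      (∀ i < 2 ^ ν - 1, K i ≤ K (i + 1)) ∧
      (∀ i < 2 ^ ν - 1, IntermediateField.relfinrank (K i) (K (i + 1)) = 2) ∧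
      2 * Real.cos (2 * Real.pi / n) ∈ K (2 ^ ν - 1) := by
  have hm : 1 ≤ 2 ^ ν := Nat.one_le_two_pow
  have h3 : 3 ≤ n := by
    have : 2 ^ 1 ≤ 2 ^ (2 ^ ν) := Nat.pow_le_pow_right (by norm_num) hm
    omega
  obtain ⟨F, hF, K, h0, h1, h2, h4⟩ := stmt19_aux n (2 ^ ν) hm hn hp h3
  exact ⟨K, h0, h1, h2, h4 ▸ hF⟩
end
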